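/- As the real number x tends to infinity, ∑_{D=1}^{⌊x⌋} h(D) = (1/4)x²(log x)² + O(x² log x); that is, the function x ↦ (∑_{D=1}^{⌊x⌋} h(D)) − (1/4)x²(log x)² is O(x² log x) as x → ∞. -/

import Mathlib

open Asymptotics Filter

/-- `orphanCount D` counts quadruples `(a,b,c,d)` of nonnegative integers with
`b + c < D`, `a > c`, `d > b`, and `a*d = D + b*c`. -/
noncomputable def orphanCount (D : ℕ) : ℕ :=
  Set.ncard {q : ℕ × ℕ × ℕ × ℕ |
    q.2.1 + q.2.2.1 < D ∧ q.1 > q.2.2.1 ∧ q.2.2.2 > q.2.1 ∧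
    q.1 * q.2.2.2 = D + q.2.1 * q.2.2.1}

/-- The tuples `⟨s, t, b, c⟩` of naturals with `s, t ≥ 1` and `s * t + s * b + t * c ≤ N`. -/
def hyperbolicTuples (N : ℕ) : Finset (Σ _ : ℕ, Σ _ : ℕ, Σ _ : ℕ, ℕ) :=
  (Finset.Icc 1 N).sigma fun s => (Finset.Icc 1 (N / s)).sigma fun t =>
    (Finset.range ((N - s * t) / s + 1)).sigma fun b =>
      Finset.range ((N - s * t - s * b) / t + 1)

theorem mem_hyperbolicTuples {N s t b c : ℕ} :
    (⟨s, t, b, c⟩ : Σ _ : ℕ, Σ _ : ℕ, Σ _ : ℕ, ℕ) ∈ hyperbolicTuples N ↔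
      1 ≤ s ∧ 1 ≤ t ∧ s * t + s * b + t * c ≤ N := by
  simp only [hyperbolicTuples, Finset.mem_sigma, Finset.mem_Icc, Finset.mem_range,
    Nat.lt_succ_iff]
  constructor
  · rintro ⟨⟨hs, -⟩, ⟨ht, h₁⟩, h₂, h₃⟩
    rw [Nat.le_div_iff_mul_le (by omega), mul_comm] at h₁ h₂ h₃
    exact ⟨hs, ht, by omega⟩
  · rintro ⟨hs, ht, h⟩
    have hst : s ≤ s * t := Nat.le_mul_of_pos_right s ht
    refine ⟨⟨hs, by omega⟩, ⟨ht, ?_⟩, ?_, ?_⟩ <;>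
      rw [Nat.le_div_iff_mul_le (by omega), mul_comm] <;> omega

/-- Writing `a = c + s` and `d = b + t`, the orphan count is the number of representations
`D = s * t + s * b + t * c`; the condition `b + c < D` is automatic. -/
theorem orphanCount_eq_card_filter {N D : ℕ} (hD : D ≤ N) :
    orphanCount D = ((hyperbolicTuples N).filter
      fun p => p.1 * p.2.1 + p.1 * p.2.2.1 + p.2.1 * p.2.2.2 = D).card := by
  rw [orphanCount, ← Set.ncard_coe_finset]
  symm
  refine Set.ncard_congr
    (fun p _ => (p.2.2.2 + p.1, p.2.2.1, p.2.2.2, p.2.2.1 + p.2.1)) ?_ ?_ ?_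
  · rintro ⟨s, t, b, c⟩ h
    simp only [Finset.coe_filter, Set.mem_ofPred_eq, mem_hyperbolicTuples] at h ⊢
    obtain ⟨⟨hs, ht, -⟩, rfl⟩ := h
    refine ⟨?_, by omega, by omega, by ring⟩
    nlinarith [Nat.zero_le b, Nat.zero_le c]
  · rintro ⟨s, t, b, c⟩ ⟨s', t', b', c'⟩ _ _ h
    simp only [Prod.mk.injEq] at h
    obtain ⟨h₁, rfl, rfl, h₂⟩ := h
    obtain rfl : s = s' := by omega
    obtain rfl : t = t' := by omega
    rfl
  · rintro ⟨a, b, c, d⟩ ⟨-, hac, hbd, h⟩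
    simp only at hac hbd h
    obtain ⟨s, rfl⟩ := Nat.exists_eq_add_of_lt hac
    obtain ⟨t, rfl⟩ := Nat.exists_eq_add_of_lt hbd
    have hst : (s + 1) * (t + 1) + (s + 1) * b + (t + 1) * c = D := by nlinarith
    refine ⟨⟨s + 1, t + 1, b, c⟩, ?_, by simp [add_assoc]⟩
    simp only [Finset.coe_filter, Set.mem_ofPred_eq, mem_hyperbolicTuples]
    exact ⟨⟨by omega, by omega, by omega⟩, hst⟩

theorem sum_orphanCount_eq_card (N : ℕ) :
    ∑ D ∈ Finset.Icc 1 N, orphanCount D = (hyperbolicTuples N).card := by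
  rw [Finset.card_eq_sum_card_fiberwise
    (f := fun p => p.1 * p.2.1 + p.1 * p.2.2.1 + p.2.1 * p.2.2.2) (t := Finset.Icc 1 N)]
  · exact Finset.sum_congr rfl fun D hD =>
      orphanCount_eq_card_filter (Finset.mem_Icc.1 hD).2
  · rintro ⟨s, t, b, c⟩ h
    rw [Finset.mem_coe, mem_hyperbolicTuples] at h
    have := Nat.mul_pos h.1 h.2.1
    simp only [Finset.coe_Icc, Set.mem_Icc]
    omega

/-- The number of lattice points `(b, c)` with `b, c ≥ 0` and `s * b + t * c ≤ M`. -/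
def triangleCount (M s t : ℕ) : ℕ :=
  ∑ b ∈ Finset.range (M / s + 1), ((M - s * b) / t + 1)

theorem card_hyperbolicTuples (N : ℕ) :
    (hyperbolicTuples N).card =
      ∑ s ∈ Finset.Icc 1 N, ∑ t ∈ Finset.Icc 1 (N / s), triangleCount (N - s * t) s t := by
  simp [hyperbolicTuples, triangleCount, Finset.card_sigma]

theorem sum_range_sub_mul (M s : ℝ) (K : ℕ) :
    ∑ b ∈ Finset.range (K + 1), (M - s * b) = (K + 1) * (2 * M - s * K) / 2 := by
  induction K with
  | zero => simp
  | succ K ih => rw [Finset.sum_range_succ, ih]; push_cast; ring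

theorem cast_sub_mul_of_mem_range {M s b : ℕ} (hs : 0 < s)
    (hb : b ∈ Finset.range (M / s + 1)) :
    ((M - s * b : ℕ) : ℝ) = M - s * b := by
  rw [Finset.mem_range, Nat.lt_succ_iff, Nat.le_div_iff_mul_le hs, mul_comm] at hb
  push_cast [Nat.cast_sub hb]
  rfl

theorem sq_div_le_triangleCount (M : ℕ) {s t : ℕ} (hs : 0 < s) (ht : 0 < t) :
    (M : ℝ) ^ 2 / (2 * (s * t)) ≤ triangleCount M s t := by
  have hs' : (0 : ℝ) < s := by exact_mod_cast hs
  have ht' : (0 : ℝ) < t := by exact_mod_cast ht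
  have hsum : (∑ b ∈ Finset.range (M / s + 1), ((M : ℝ) - s * b)) / t ≤ triangleCount M s t := by
    rw [triangleCount, Nat.cast_sum, Finset.sum_div]
    refine Finset.sum_le_sum fun b hb => ?_
    rw [← cast_sub_mul_of_mem_range hs hb]
    push_cast
    rw [div_le_iff₀ ht']
    rw [mul_comm _ (t : ℝ)]
    exact_mod_cast (Nat.lt_mul_div_succ (M - s * b) ht).le
  refine le_trans ?_ hsum
  rw [sum_range_sub_mul]
  have hM : (M : ℝ) = s * (M / s : ℕ) + (M % s : ℕ) := by exact_mod_cast (Nat.div_add_mod M s).symm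
  have hr : ((M % s : ℕ) : ℝ) ≤ s := by exact_mod_cast (Nat.mod_lt M hs).le
  have hr' : (0 : ℝ) ≤ (M % s : ℕ) := by positivity
  have hK : (0 : ℝ) ≤ (M / s : ℕ) := by positivity
  generalize ((M % s : ℕ) : ℝ) = r at *
  generalize ((M / s : ℕ) : ℝ) = K at *
  rw [hM, div_div, div_le_div_iff₀ (by positivity) (by positivity)]
  have key : (s * K + r) ^ 2 ≤ s * ((K + 1) * (2 * (s * K + r) - s * K)) := by
    nlinarith [mul_nonneg (mul_pos hs' hs').le hK, mul_nonneg hr' (sub_nonneg.2 hr),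
      mul_nonneg hr' hs'.le]
  nlinarith [mul_le_mul_of_nonneg_left key ht'.le]

theorem triangleCount_le_sq_div (M : ℕ) {s t : ℕ} (hs : 0 < s) (ht : 0 < t) :
    (triangleCount M s t : ℝ) ≤ ((M : ℝ) + s + t) ^ 2 / (2 * (s * t)) := by
  have hs' : (0 : ℝ) < s := by exact_mod_cast hs
  have ht' : (0 : ℝ) < t := by exact_mod_cast ht
  have hsum : (triangleCount M s t : ℝ) ≤
      (∑ b ∈ Finset.range (M / s + 1), (((M : ℝ) + t) - s * b)) / t := by
    rw [triangleCount, Nat.cast_sum, Finset.sum_div]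
    refine Finset.sum_le_sum fun b hb => ?_
    have : (((M - s * b) / t : ℕ) : ℝ) ≤ ((M - s * b : ℕ) : ℝ) / t := Nat.cast_div_le
    rw [cast_sub_mul_of_mem_range hs hb] at this
    push_cast
    rw [add_sub_right_comm, add_div, div_self ht'.ne']
    linarith
  refine hsum.trans ?_
  rw [sum_range_sub_mul]
  have hM : (M : ℝ) = s * (M / s : ℕ) + (M % s : ℕ) := by exact_mod_cast (Nat.div_add_mod M s).symm
  generalize ((M % s : ℕ) : ℝ) = r at *
  generalize ((M / s : ℕ) : ℝ) = K at *
  rw [hM, div_div, div_le_div_iff₀ (by positivity) (by positivity)]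
  have key : s * ((K + 1) * (2 * (s * K + r + t) - s * K)) ≤ (s * K + r + s + t) ^ 2 := by
    nlinarith [sq_nonneg (r + t), sq_nonneg (s * (K + 1)), sq_nonneg (r + t - s * (K + 1))]
  nlinarith [mul_le_mul_of_nonneg_left key ht'.le]

/-- The sum of `1 / (s * t)` over the pairs of positive integers with `s * t ≤ N`. -/
noncomputable def hyperbolaSum (N : ℕ) : ℝ :=
  ∑ s ∈ Finset.Icc 1 N, ∑ t ∈ Finset.Icc 1 (N / s), 1 / ((s : ℝ) * t)

theorem hyperbolaSum_nonneg (N : ℕ) : 0 ≤ hyperbolaSum N :=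
  Finset.sum_nonneg fun _ _ => Finset.sum_nonneg fun _ _ => by positivity

theorem card_hyperbolicTuples_le (N : ℕ) :
    ((hyperbolicTuples N).card : ℝ) ≤ ((N : ℝ) + 1) ^ 2 / 2 * hyperbolaSum N := by
  rw [card_hyperbolicTuples, hyperbolaSum, Finset.mul_sum]
  push_cast
  refine Finset.sum_le_sum fun s hs => ?_
  rw [Finset.mul_sum]
  refine Finset.sum_le_sum fun t ht => ?_
  rw [Finset.mem_Icc] at hs ht
  have hst := ht.2
  rw [Nat.le_div_iff_mul_le hs.1, mul_comm] at hst
  have hs' : (1 : ℝ) ≤ s := by exact_mod_cast hs.1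
  have ht' : (1 : ℝ) ≤ t := by exact_mod_cast ht.1
  refine (triangleCount_le_sq_div (N - s * t) hs.1 ht.1).trans ?_
  rw [div_mul_div_comm, mul_one]
  have hle : ((N - s * t : ℕ) : ℝ) + s + t ≤ N + 1 := by
    rw [Nat.cast_sub hst]
    push_cast
    nlinarith
  gcongr ?_ ^ 2 / _

theorem le_card_hyperbolicTuples (N : ℕ) :
    (N : ℝ) ^ 2 / 2 * hyperbolaSum N - (N : ℝ) ^ 2 * harmonic N ≤
      (hyperbolicTuples N).card := by
  have hharm : ∑ s ∈ Finset.Icc 1 N, ∑ _t ∈ Finset.Icc 1 (N / s), (N : ℝ) ≤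
      (N : ℝ) ^ 2 * harmonic N := by
    rw [harmonic_eq_sum_Icc]
    push_cast
    rw [Finset.mul_sum]
    refine Finset.sum_le_sum fun s _ => ?_
    have : ((N / s : ℕ) : ℝ) ≤ (N : ℝ) / s := Nat.cast_div_le
    rw [Finset.sum_const, Nat.card_Icc, Nat.add_sub_cancel, nsmul_eq_mul]
    calc ((N / s : ℕ) : ℝ) * N ≤ (N : ℝ) / s * N := by gcongr
      _ = (N : ℝ) ^ 2 * (s : ℝ)⁻¹ := by ring
  refine (sub_le_sub_left hharm _).trans ?_
  rw [card_hyperbolicTuples, hyperbolaSum, Finset.mul_sum, ← Finset.sum_sub_distrib]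
  push_cast
  refine Finset.sum_le_sum fun s hs => ?_
  rw [Finset.mul_sum, ← Finset.sum_sub_distrib]
  refine Finset.sum_le_sum fun t ht => ?_
  rw [Finset.mem_Icc] at hs ht
  have hst := ht.2
  rw [Nat.le_div_iff_mul_le hs.1, mul_comm] at hst
  have hs' : (0 : ℝ) < s := by exact_mod_cast hs.1
  have ht' : (0 : ℝ) < t := by exact_mod_cast ht.1
  refine le_trans ?_ (sq_div_le_triangleCount (N - s * t) hs.1 ht.1)
  rw [Nat.cast_sub hst, Nat.cast_mul]
  have hexp : ((N : ℝ) - s * t) ^ 2 / (2 * (s * t)) =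
      (N : ℝ) ^ 2 / 2 * (1 / (s * t)) - N + s * t / 2 := by
    field_simp
    ring
  rw [hexp]
  linarith [mul_pos hs' ht']

/-- One step of the comparison of `log n / n` with the increment of `(log n) ^ 2 / 2`. -/
theorem abs_log_div_sub_le {n : ℝ} (hn : 1 ≤ n) :
    |Real.log (n + 1) / (n + 1) - (Real.log (n + 1) ^ 2 / 2 - Real.log n ^ 2 / 2)| ≤
      (n + 1)⁻¹ := by
  have hn0 : 0 < n := by linarith
  have hlog : Real.log (n + 1) ≤ n := by
    linarith [Real.log_le_sub_one_of_pos (show 0 < n + 1 by linarith)]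
  have hlog0 : 0 ≤ Real.log (n + 1) := Real.log_nonneg (by linarith)
  have hupper : Real.log (n + 1) - Real.log n ≤ n⁻¹ := by
    rw [← Real.log_div (by positivity) hn0.ne']
    refine (Real.log_le_sub_one_of_pos (by positivity)).trans (le_of_eq ?_)
    field_simp
    ring
  have hlower : (n + 1)⁻¹ ≤ Real.log (n + 1) - Real.log n := by
    rw [← Real.log_div (by positivity) hn0.ne']
    refine le_trans (le_of_eq ?_) (Real.one_sub_inv_le_log_of_pos (by positivity))
    field_simp
    ring
  have hgap : n⁻¹ - (n + 1)⁻¹ = n⁻¹ * (n + 1)⁻¹ := by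
    field_simp
    ring
  have hinv : n * n⁻¹ = 1 := mul_inv_cancel₀ hn0.ne'
  have hp : 0 < (n + 1)⁻¹ := by positivity
  have hq : 0 < n⁻¹ := by positivity
  have hq1 : n⁻¹ ≤ 1 := inv_le_one_of_one_le₀ hn
  have hu2 : (Real.log (n + 1) - Real.log n) ^ 2 / 2 ≤ (n + 1)⁻¹ := by
    have h1 : (Real.log (n + 1) - Real.log n) ^ 2 ≤ n⁻¹ ^ 2 := by
      gcongr
      linarith
    have h2 : n⁻¹ ≤ 2 * (n + 1)⁻¹ := by
      nlinarith
    nlinarith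
  have hu1 : (Real.log (n + 1) - Real.log n - (n + 1)⁻¹) * Real.log (n + 1) ≤ (n + 1)⁻¹ := by
    calc _ ≤ (n⁻¹ * (n + 1)⁻¹) * n := by
          gcongr
          linarith
      _ = (n + 1)⁻¹ * (n * n⁻¹) := by ring
      _ = (n + 1)⁻¹ := by rw [hinv, mul_one]
  have hu1' : 0 ≤ (Real.log (n + 1) - Real.log n - (n + 1)⁻¹) * Real.log (n + 1) :=
    mul_nonneg (by linarith) hlog0
  have hu2' : 0 ≤ (Real.log (n + 1) - Real.log n) ^ 2 / 2 := by positivity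
  rw [div_eq_mul_inv, abs_le]
  constructor <;> nlinarith

theorem abs_sum_log_div_sub_le (N : ℕ) :
    |∑ s ∈ Finset.Icc 1 N, Real.log s / s - Real.log N ^ 2 / 2| ≤ (harmonic N : ℝ) := by
  induction N with
  | zero => simp
  | succ N ih =>
    rcases N.eq_zero_or_pos with rfl | hN
    · simp
    · have hstep := abs_log_div_sub_le (n := N) (by exact_mod_cast hN)
      rw [Finset.sum_Icc_succ_top (by omega), harmonic_succ]
      push_cast
      rw [abs_le] at *
      constructor <;> linarith [ih.1, ih.2, hstep.1, hstep.2]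

theorem abs_hyperbolaSum_sub_le {N : ℕ} (hN : 1 ≤ N) :
    |hyperbolaSum N - Real.log N ^ 2 / 2| ≤ 3 * (1 + Real.log N) := by
  have hN' : (1 : ℝ) ≤ N := by exact_mod_cast hN
  have hinner : hyperbolaSum N =
      ∑ s ∈ Finset.Icc 1 N, (s : ℝ)⁻¹ * (harmonic (N / s) : ℝ) := by
    refine Finset.sum_congr rfl fun s _ => ?_
    rw [harmonic_eq_sum_Icc]
    push_cast
    rw [Finset.mul_sum]
    exact Finset.sum_congr rfl fun t _ => by rw [one_div, mul_inv]
  have hharm : (harmonic N : ℝ) = ∑ s ∈ Finset.Icc 1 N, (s : ℝ)⁻¹ := by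
    rw [harmonic_eq_sum_Icc]
    push_cast
    rfl
  have hmain : ∑ s ∈ Finset.Icc 1 N, (s : ℝ)⁻¹ * (Real.log N - Real.log s) =
      Real.log N * harmonic N - ∑ s ∈ Finset.Icc 1 N, Real.log s / s := by
    rw [hharm, Finset.mul_sum, ← Finset.sum_sub_distrib]
    exact Finset.sum_congr rfl fun s _ => by ring
  have hbounds : ∀ s ∈ Finset.Icc 1 N, Real.log N - Real.log s ≤ (harmonic (N / s) : ℝ) ∧
      (harmonic (N / s) : ℝ) ≤ 1 + (Real.log N - Real.log s) := by
    intro s hs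
    rw [Finset.mem_Icc] at hs
    have hs0 : (0 : ℝ) < s := by exact_mod_cast hs.1
    rw [← Real.log_div (by positivity) hs0.ne', ← Nat.floor_div_eq_div (K := ℝ)]
    refine ⟨log_le_harmonic_floor _ (by positivity), harmonic_floor_le_one_add_log _ ?_⟩
    rw [one_le_div hs0]
    exact_mod_cast hs.2
  have hlow : ∑ s ∈ Finset.Icc 1 N, (s : ℝ)⁻¹ * (Real.log N - Real.log s) ≤ hyperbolaSum N := by
    rw [hinner]
    exact Finset.sum_le_sum fun s hs =>
      mul_le_mul_of_nonneg_left (hbounds s hs).1 (by positivity)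
  have hup : hyperbolaSum N ≤
      harmonic N + ∑ s ∈ Finset.Icc 1 N, (s : ℝ)⁻¹ * (Real.log N - Real.log s) := by
    rw [hinner, hharm, ← Finset.sum_add_distrib]
    refine Finset.sum_le_sum fun s hs => ?_
    rw [← mul_one_add]
    exact mul_le_mul_of_nonneg_left (hbounds s hs).2 (by positivity)
  have hl : 0 ≤ Real.log N := Real.log_nonneg hN'
  have hH : (harmonic N : ℝ) ≤ 1 + Real.log N := harmonic_le_one_add_log N
  have hH' : Real.log N ≤ harmonic N := by
    simpa using log_le_harmonic_floor (N : ℝ) (by positivity)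
  have hlogsum := abs_le.1 (abs_sum_log_div_sub_le N)
  have h1 := mul_le_mul_of_nonneg_left hH hl
  have h2 := mul_le_mul_of_nonneg_left hH' hl
  rw [abs_le]
  constructor <;> nlinarith [hlogsum.1, hlogsum.2]

theorem stmt_3 :
    (fun x : ℝ =>
        (∑ D ∈ Finset.Icc 1 ⌊x⌋₊, (orphanCount D : ℝ)) -
          (1 / 4) * x ^ 2 * (Real.log x) ^ 2)
      =O[atTop] (fun x : ℝ => x ^ 2 * Real.log x) := by
  refine IsBigO.of_bound 20 ?_
  filter_upwards [eventually_ge_atTop (2 : ℝ), Real.tendsto_log_atTop.eventually_ge_atTop 1]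
    with x hx hL
  rw [← Nat.cast_sum, sum_orphanCount_eq_card]
  have hN : 1 ≤ ⌊x⌋₊ := Nat.le_floor (by push_cast; linarith)
  have hup := card_hyperbolicTuples_le ⌊x⌋₊
  have hlow := le_card_hyperbolicTuples ⌊x⌋₊
  have hS := abs_le.1 (abs_hyperbolaSum_sub_le hN)
  have hS0 := hyperbolaSum_nonneg ⌊x⌋₊
  have hH : (harmonic ⌊x⌋₊ : ℝ) ≤ 1 + Real.log x := harmonic_floor_le_one_add_log x (by linarith)
  have hNx : (⌊x⌋₊ : ℝ) ≤ x := Nat.floor_le (by linarith)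
  have hxN : x < ⌊x⌋₊ + 1 := Nat.lt_floor_add_one x
  have hN' : (1 : ℝ) ≤ ⌊x⌋₊ := by exact_mod_cast hN
  have hl0 : 0 ≤ Real.log ⌊x⌋₊ := Real.log_nonneg hN'
  have hlL : Real.log ⌊x⌋₊ ≤ Real.log x := Real.log_le_log (by linarith) hNx
  have hLl : Real.log x ≤ Real.log ⌊x⌋₊ + 1 := by
    have h2 : Real.log x ≤ Real.log (2 * ⌊x⌋₊) := Real.log_le_log (by linarith) (by linarith)
    rw [Real.log_mul (by norm_num) (by linarith)] at h2
    linarith [Real.log_two_lt_d9]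
  have hLx : Real.log x ≤ x := (Real.log_le_sub_one_of_pos (by linarith)).trans (by linarith)
  generalize ((hyperbolicTuples ⌊x⌋₊).card : ℝ) = T at *
  generalize hyperbolaSum ⌊x⌋₊ = S at *
  generalize (harmonic ⌊x⌋₊ : ℝ) = H at *
  generalize Real.log ⌊x⌋₊ = l at *
  generalize Real.log x = L at *
  generalize (⌊x⌋₊ : ℝ) = n at *
  have hSup : S ≤ L ^ 2 / 2 + 6 * L := by nlinarith [hS.2]
  have hSlow : L ^ 2 / 2 - 7 * L ≤ S := by nlinarith [hS.1]
  have hx0 : 0 < x := by linarith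
  have hxL : 0 ≤ x * L * (x - L) := by
    have : 0 ≤ x - L := by linarith
    positivity
  have hxxL : 2 * (x * L) ≤ x ^ 2 * L := by nlinarith [mul_pos hx0 (by linarith : 0 < L)]
  have hTup : T ≤ (x ^ 2 + 3 * x) / 2 * (L ^ 2 / 2 + 6 * L) := by
    refine hup.trans (mul_le_mul ?_ hSup hS0 (by positivity))
    nlinarith
  have hTlow : (x ^ 2 - 2 * x) / 2 * (L ^ 2 / 2 - 7 * L) - x ^ 2 * (2 * L) ≤ T := by
    have h1 : (x ^ 2 - 2 * x) / 2 * (L ^ 2 / 2 - 7 * L) ≤ n ^ 2 / 2 * S := by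
      refine (mul_le_mul_of_nonneg_left hSlow (by nlinarith)).trans
        (mul_le_mul_of_nonneg_right ?_ hS0)
      nlinarith
    have h2 : n ^ 2 * H ≤ x ^ 2 * (2 * L) := by
      calc n ^ 2 * H ≤ n ^ 2 * (2 * L) := by gcongr; linarith
        _ ≤ x ^ 2 * (2 * L) := by gcongr
    linarith
  have hpos : 0 ≤ x ^ 2 * L := by positivity
  rw [Real.norm_eq_abs, Real.norm_eq_abs, abs_of_nonneg hpos, abs_le]
  constructor <;> nlinarith
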